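/- Let (A,B) be an invertible Jones pair of n×n complex matrices with A symmetric. Then for each H ∈ N_{A,B} there exists a unique n×n matrix K such that Kᵀ ∈ N_{A,Bᵀ} and Θ_{A,B}(H) = (Θ_{A,Bᵀ}(Kᵀ))ᵀ. -/

import Mathlib

open Matrix

variable {m : Type*} [Fintype m] [DecidableEq m]

/-- The Schur (entrywise) inverse `A^(-)` of a matrix: `(A^(-))_{ij} = (A_{ij})⁻¹`. -/
noncomputable def sinv (A : Matrix m m ℂ) : Matrix m m ℂ := Matrix.of fun i j => (A i j)⁻¹

/-- A type-II matrix: a Schur invertible matrix `W` with `W * (W^(-))ᵀ = n • I`,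
where `n` is the size of the matrix. -/
def IsTypeII (A : Matrix m m ℂ) : Prop :=
  (∀ i j, A i j ≠ 0) ∧ A * (sinv A)ᵀ = (Fintype.card m : ℂ) • (1 : Matrix m m ℂ)

/-- `v_{ij} = (A e_i) ∘ (B e_j)`: the entrywise product of column `i` of `A`
with column `j` of `B`. -/
def colProd (A B : Matrix m m ℂ) (i j : m) : m → ℂ := fun k => A k i * B k j

/-- Membership in the Nomura algebra `N_{A,B}`: every `v_{ij}` is an eigenvector of `M`. -/
def InNomura (A B M : Matrix m m ℂ) : Prop :=
  ∀ i j, ∃ c : ℂ, M.mulVec (colProd A B i j) = c • colProd A B i j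

/-- `S = Θ_{A,B}(M)`: the matrix of eigenvalues, i.e. `M v_{ij} = S_{ij} v_{ij}` for all `i,j`. -/
def IsTheta (A B M S : Matrix m m ℂ) : Prop :=
  ∀ i j, M.mulVec (colProd A B i j) = S i j • colProd A B i j

/-- `(A,B)` is a Jones pair: `A` invertible, `B` Schur invertible, and
`X_A Δ_B X_A = Δ_B X_A Δ_B` and `X_A Δ_{Bᵀ} X_A = Δ_{Bᵀ} X_A Δ_{Bᵀ}`
as operators on matrices. -/
def IsJonesPair (A B : Matrix m m ℂ) : Prop :=
  IsUnit A ∧ (∀ i j, B i j ≠ 0) ∧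
  (∀ M : Matrix m m ℂ, A * (B ⊙ (A * M)) = B ⊙ (A * (B ⊙ M))) ∧
  (∀ M : Matrix m m ℂ, A * (Bᵀ ⊙ (A * M)) = Bᵀ ⊙ (A * (Bᵀ ⊙ M)))

/-- An invertible Jones pair: a Jones pair in which moreover `A` is Schur
invertible and `B` is invertible. -/
def IsInvertibleJonesPair (A B : Matrix m m ℂ) : Prop :=
  IsJonesPair A B ∧ (∀ i j, A i j ≠ 0) ∧ IsUnit B

/-- `W` is a spin model: for some `d` with `d² = n`, `(d⁻¹ W, W^(-))` is an
invertible Jones pair. -/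
def IsSpinModel (W : Matrix m m ℂ) : Prop :=
  ∃ d : ℂ, d ^ 2 = (Fintype.card m : ℂ) ∧ IsInvertibleJonesPair (d⁻¹ • W) (sinv W)

/-- Given an invertible Jones pair `(A,B)` with `A` symmetric, `K` is paired with
`H ∈ N_{A,B}` if `Kᵀ ∈ N_{A,Bᵀ}` and `Θ_{A,B}(H) = (Θ_{A,Bᵀ}(Kᵀ))ᵀ`. -/
def Paired (A B H K : Matrix m m ℂ) : Prop :=
  ∃ S : Matrix m m ℂ, IsTheta A B H S ∧ IsTheta A Bᵀ Kᵀ Sᵀ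

/-- The `4n × 4n` matrix with `4 × 4` block structure
`[[P, Q, R, R], [Q, P, R, R], [S, S, T, U], [S, S, U, T]]`. -/
def blockMat {n : ℕ} (P Q R S T U : Matrix (Fin n) (Fin n) ℂ) :
    Matrix (Fin 4 × Fin n) (Fin 4 × Fin n) ℂ :=
  Matrix.of fun x y =>
    (![![P, Q, R, R], ![Q, P, R, R], ![S, S, T, U], ![S, S, U, T]] x.1 y.1) x.2 y.2

/-- Yamada's `4n × 4n` matrix `V` built from `A`, `B` and `d` with `d² = n`. -/
noncomputable def Vmat {n : ℕ} (A B : Matrix (Fin n) (Fin n) ℂ) (d : ℂ) :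
    Matrix (Fin 4 × Fin n) (Fin 4 × Fin n) ℂ :=
  blockMat (d • A) (-(d • A)) (sinv B) (sinv B)ᵀ (d • A) (-(d • A))

/-!
Write `N_A` for `N_{A,A^(-)}` and `Θ_A` for `Θ_{A,A^(-)}`. A Jones pair satisfies `Θ_{A,B}(A) = B`,
and an invertible one consists of type-II matrices. If `B` is type II, then solving
`Θ_{A,B}(M) = S` for `M` shows that `S` maps the quotient `Bᵀe_i ∘ (Bᵀ)^(-)e_j` to `n M_{ij}` times
`Aᵀe_j ∘ (Aᵀ)^(-)e_i`. This exchange law has three consequences.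

* Taking `B = A^(-)` gives the duality `Θ_A(L) = T ↔ Θ_{Aᵀ}(T) = n Lᵀ`.
* Since `Θ_{A,B}(A) = B`, the matrix `B` carries the eigenvectors of `N_{Bᵀ}` to those of `N_{Aᵀ}`,
  so conjugation by `B` identifies these algebras.
* Likewise `Θ_{A,B}(A ∘ X) = B N ↔ Θ_{Bᵀ}(N) = X`.

All of this also applies to the Jones pairs `(A, Bᵀ)` and `(Aᵀ, B)`. If `Θ_{A,B}(H) = S`, then
`B⁻¹ S ∈ N_{Bᵀ}`, so `S B⁻¹ ∈ N_{Aᵀ}`; dualising, conjugating back through `N_A` and dualising again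
gives `(S B⁻¹)ᵀ ∈ N_B`, which says that `Sᵀ` lies in the image of `Θ_{A,Bᵀ}`.
-/

section Theta

variable {ι : Type*} [Fintype ι] {A B M N S S' : Matrix ι ι ℂ}

theorem isTheta_iff_sum :
    IsTheta A B M S ↔ ∀ i j l, ∑ k, M l k * (A k i * B k j) = S i j * (A l i * B l j) := by
  simp only [IsTheta, funext_iff, mulVec, dotProduct, colProd, Pi.smul_apply, smul_eq_mul]

theorem IsTheta.swap (h : IsTheta A B M S) : IsTheta B A M Sᵀ := by
  rw [isTheta_iff_sum] at h ⊢
  intro i j l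
  simpa only [mul_comm, transpose_apply] using h j i l

theorem IsTheta.theta_unique (hA : ∀ i j, A i j ≠ 0) (hB : ∀ i j, B i j ≠ 0)
    (h : IsTheta A B M S) (h' : IsTheta A B M S') : S = S' := by
  ext i j
  have hv : colProd A B i j ≠ 0 := fun hv => mul_ne_zero (hA i i) (hB i j) (congrFun hv i)
  exact smul_left_injective ℂ hv ((h i j).symm.trans (h' i j))

theorem IsTheta.transpose_self (h : IsTheta A B A B) : IsTheta Aᵀ B Aᵀ B := by
  rw [isTheta_iff_sum] at h ⊢
  intro i j l
  simpa only [transpose_apply, mul_left_comm, mul_comm] using h l j i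

variable [DecidableEq ι]

theorem isTheta_iff_mul_diagonal_mul :
    IsTheta A B M S ↔
      ∀ i, M * diagonal (A.col i) * B = diagonal (A.col i) * B * diagonal (S.row i) := by
  rw [isTheta_iff_sum]
  refine forall_congr' fun i => forall_comm.trans ?_
  rw [← Matrix.ext_iff]
  refine forall₂_congr fun l j => ?_
  rw [mul_diagonal, diagonal_mul, mul_apply, mul_comm (S i j)]
  simp only [mul_diagonal, mul_assoc, col_apply, row_apply]

theorem IsTheta.eq_of_theta_eq (hA : ∀ i j, A i j ≠ 0) (hB : IsUnit B)
    (hM : IsTheta A B M S) (hN : IsTheta A B N S) : M = N := by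
  rw [isTheta_iff_mul_diagonal_mul] at hM hN
  ext i j
  have hD : IsUnit (diagonal (A.col i)) :=
    isUnit_diagonal.2 (Pi.isUnit_iff.2 fun k => (hA k i).isUnit)
  exact congrFun₂ (hD.mul_left_injective (hB.mul_left_injective ((hM i).trans (hN i).symm))) i j

end Theta

section TypeII

variable {ι : Type*} [Fintype ι]

theorem card_mul_eq_one_of_sum_eq_one {R : Type*} [CommSemiring R] {a r : ι → R}
    (hrow : ∀ i, ∑ k, a i * r k = 1) (hcol : ∀ k, ∑ i, a i * r k = 1) (i k : ι) :
    (Fintype.card ι : R) * (a i * r k) = 1 := by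
  have hcard : (∑ i, a i) * ∑ k, r k = Fintype.card ι := by
    simp only [Finset.sum_mul_sum, hrow, Finset.sum_const, Finset.card_univ, nsmul_one]
  calc (Fintype.card ι : R) * (a i * r k)
      = (a i * ∑ k, r k) * ((∑ i, a i) * r k) := by rw [← hcard]; ring
    _ = (∑ k, a i * r k) * ∑ i, a i * r k := by rw [← Finset.mul_sum, ← Finset.sum_mul]
    _ = 1 := by rw [hrow, hcol, one_mul]

variable [DecidableEq ι] {A B C X Y L T M S : Matrix ι ι ℂ}

/-- `A⁻¹ ⊙ Aᵀ` has all row and column sums equal to `1`; the hypothesis says it has rank one, which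
forces all its entries to be equal. -/
theorem isTypeII_of_inv_hadamard_transpose_mul {a : ι → ℂ} (hA : IsUnit A) (hC : IsUnit C)
    (h : (A⁻¹ ⊙ Aᵀ) * C = vecMulVec a 1) : IsTypeII A := by
  have hA' := (isUnit_iff_isUnit_det A).1 hA
  obtain ⟨r, hr⟩ : ∃ r, A⁻¹ ⊙ Aᵀ = vecMulVec a r := by
    refine ⟨1 ᵥ* C⁻¹, ?_⟩
    rw [← vecMulVec_mul, ← h, mul_nonsing_inv_cancel_right _ _ ((isUnit_iff_isUnit_det C).1 hC)]
  have har : ∀ i k, a i * r k = A⁻¹ i k * A k i := fun i k => (congrFun₂ hr i k).symm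
  have hconst : ∀ i k, (Fintype.card ι : ℂ) * (A⁻¹ i k * A k i) = 1 := by
    intro i k
    rw [← har]
    refine card_mul_eq_one_of_sum_eq_one (fun i => ?_) (fun k => ?_) i k
    · simp only [har, ← mul_apply, nonsing_inv_mul A hA', one_apply_eq]
    · simp only [har, mul_comm (A⁻¹ _ _), ← mul_apply, mul_nonsing_inv A hA', one_apply_eq]
  have hA0 : ∀ k i, A k i ≠ 0 := fun k i h0 => by simpa [h0] using hconst i k
  have hinv : (sinv A)ᵀ = (Fintype.card ι : ℂ) • A⁻¹ := by
    ext i k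
    refine inv_eq_of_mul_eq_one_left ?_
    rw [Matrix.smul_apply, smul_eq_mul, mul_assoc, hconst]
  exact ⟨hA0, by rw [hinv, Matrix.mul_smul, mul_nonsing_inv A hA']⟩

theorem isTypeII_sinv (hA : IsTypeII A) : IsTypeII (sinv A) := by
  refine ⟨fun i j => inv_ne_zero (hA.1 i j), ?_⟩
  have hinv : sinv (sinv A) = A := by ext; exact inv_inv _
  rw [hinv, ← transpose_inj, transpose_mul, transpose_transpose, hA.2, transpose_smul,
    transpose_one]

theorem IsTypeII.isUnit (hA : IsTypeII A) : IsUnit A := by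
  cases isEmpty_or_nonempty ι
  · exact isUnit_of_subsingleton A
  have hn : (Fintype.card ι : ℂ) ≠ 0 := Nat.cast_ne_zero.2 Fintype.card_ne_zero
  refine IsUnit.of_mul_eq_one ((Fintype.card ι : ℂ)⁻¹ • (sinv A)ᵀ) ?_
  rw [Matrix.mul_smul, hA.2, inv_smul_smul₀ hn]

theorem IsTypeII.transpose_sinv_mul (hA : IsTypeII A) :
    (sinv A)ᵀ * A = (Fintype.card ι : ℂ) • 1 := by
  apply hA.isUnit.mul_right_injective
  simp only [← Matrix.mul_assoc, hA.2, Matrix.mul_smul, Matrix.smul_mul, Matrix.mul_one,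
    Matrix.one_mul]

theorem IsTypeII.transpose (hA : IsTypeII A) : IsTypeII Aᵀ := by
  refine ⟨fun i j => hA.1 j i, ?_⟩
  rw [← transpose_inj, transpose_mul, transpose_transpose]
  exact hA.transpose_sinv_mul.trans (by rw [transpose_smul, transpose_one])

theorem IsTypeII.mul_eq_iff (hB : IsTypeII B) :
    X * B = Y ↔ (Fintype.card ι : ℂ) • X = Y * (sinv B)ᵀ := by
  rw [← (isTypeII_sinv hB).transpose.isUnit.mul_left_inj, Matrix.mul_assoc, hB.2, Matrix.mul_smul,
    Matrix.mul_one]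

theorem isTheta_iff_mulVec_colProd_sinv (hA : ∀ i j, A i j ≠ 0) (hB : IsTypeII B) :
    IsTheta A B M S ↔ ∀ i j, S *ᵥ colProd Bᵀ (sinv Bᵀ) i j =
      ((Fintype.card ι : ℂ) * M i j) • colProd Aᵀ (sinv Aᵀ) j i := by
  have hentry : ∀ x i j, ((Fintype.card ι : ℂ) • (M * diagonal (A.col x))) i j =
      (diagonal (A.col x) * B * diagonal (S.row x) * (sinv B)ᵀ) i j ↔
      (S *ᵥ colProd Bᵀ (sinv Bᵀ) i j) x =
        (((Fintype.card ι : ℂ) * M i j) • colProd Aᵀ (sinv Aᵀ) j i) x := by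
    intro x i j
    have hsum : (diagonal (A.col x) * B * diagonal (S.row x) * (sinv B)ᵀ) i j =
        A i x * (S *ᵥ colProd Bᵀ (sinv Bᵀ) i j) x := by
      simp only [mul_apply (N := (sinv B)ᵀ), mul_diagonal, diagonal_mul, mulVec, dotProduct,
        Finset.mul_sum]
      refine Finset.sum_congr rfl fun p _ => ?_
      simp only [colProd, sinv, of_apply, transpose_apply, col_apply, row_apply]
      ring
    have hA0 : A i x ≠ 0 := hA i x
    have hlhs : ((Fintype.card ι : ℂ) • (M * diagonal (A.col x))) i j =
        A i x * (((Fintype.card ι : ℂ) * M i j) • colProd Aᵀ (sinv Aᵀ) j i) x := by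
      simp only [Matrix.smul_apply, mul_diagonal, col_apply, Pi.smul_apply, smul_eq_mul, colProd,
        sinv, of_apply, transpose_apply]
      field_simp
    rw [hlhs, hsum, mul_right_inj' hA0, eq_comm]
  simp only [isTheta_iff_mul_diagonal_mul, hB.mul_eq_iff, ← Matrix.ext_iff, hentry, funext_iff]
  exact ⟨fun h i j x => h x i j, fun h x i j => h i j x⟩

theorem isTheta_sinv_iff_transpose (hA : IsTypeII A) :
    IsTheta A (sinv A) L T ↔ IsTheta Aᵀ (sinv Aᵀ) T ((Fintype.card ι : ℂ) • Lᵀ) := by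
  have hv : ∀ i j, colProd (sinv A)ᵀ (sinv (sinv A)ᵀ) i j = colProd Aᵀ (sinv Aᵀ) j i := by
    intro i j
    ext k
    simp only [colProd, sinv, of_apply, transpose_apply, inv_inv, mul_comm]
  rw [isTheta_iff_mulVec_colProd_sinv hA.1 (isTypeII_sinv hA)]
  simp only [hv]
  exact forall_comm

end TypeII

section Jones

variable {ι : Type*} [Fintype ι] {A B H L N S X : Matrix ι ι ℂ}

theorem isTheta_of_jones_relation
    (h : ∀ M : Matrix ι ι ℂ, A * (B ⊙ (A * M)) = B ⊙ (A * (B ⊙ M))) : IsTheta A B A B := by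
  classical
  rw [isTheta_iff_sum]
  intro i j l
  have hcol := congrFun₂ (h (of fun k _ => if k = i then 1 else 0)) l j
  simp only [mul_apply, hadamard_apply, of_apply, mul_ite, mul_one, mul_zero, Finset.sum_ite_eq',
    Finset.mem_univ, if_true] at hcol
  calc ∑ k, A l k * (A k i * B k j) = ∑ k, A l k * (B k j * A k i) := by
        simp only [mul_comm (A _ i)]
    _ = B i j * (A l i * B l j) := by rw [hcol]; ring

variable [DecidableEq ι]

/-- The braid relation `A D A = D A D` for `D = diag(B e_j)` says `A⁻¹ D A = D A D⁻¹`, whose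
diagonal does not depend on `j`. -/
theorem IsTheta.isTypeII_left (h : IsTheta A B A B) (hA : IsUnit A) (hB : IsUnit B)
    (hB0 : ∀ i j, B i j ≠ 0) : IsTypeII A := by
  refine isTypeII_of_inv_hadamard_transpose_mul (a := A.diag) hA hB ?_
  ext i j
  have hbraid := isTheta_iff_mul_diagonal_mul.1 h.swap j
  have hconj : A⁻¹ * diagonal (B.col j) * A * diagonal (B.col j) = diagonal (B.col j) * A := by
    have hA' := (isUnit_iff_isUnit_det A).1 hA
    rw [row_transpose] at hbraid
    rw [Matrix.mul_assoc A⁻¹, Matrix.mul_assoc A⁻¹, ← hbraid, Matrix.mul_assoc A,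
      nonsing_inv_mul_cancel_left _ _ hA']
  have hdiag : (A⁻¹ * diagonal (B.col j) * A) i i * B i j = A i i * B i j := by
    simpa only [mul_diagonal, diagonal_mul, col_apply, mul_comm (B i j)] using congrFun₂ hconj i i
  calc ((A⁻¹ ⊙ Aᵀ) * B) i j = (A⁻¹ * diagonal (B.col j) * A) i i := by
        simp only [mul_apply (M := A⁻¹ ⊙ Aᵀ), mul_apply (N := A), mul_diagonal, hadamard_apply,
          transpose_apply, col_apply, mul_right_comm]
    _ = vecMulVec A.diag 1 i j := by
        rw [mul_right_cancel₀ (hB0 i j) hdiag, vecMulVec_apply, diag_apply, Pi.one_apply, mul_one]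

/-- Here `A D = D B E B⁻¹` for `D = diag(A e_i)` and `E` the diagonal matrix on row `i` of `B`, so
the diagonal of `B E B⁻¹` is that of `A`, whatever `i` is. -/
theorem IsTheta.isTypeII_right (h : IsTheta A B A B) (hA0 : ∀ i j, A i j ≠ 0) (hB : IsUnit B) :
    IsTypeII B := by
  have hBT : IsUnit Bᵀ := (isUnit_transpose B).2 hB
  refine (isTypeII_of_inv_hadamard_transpose_mul (a := A.diag) hBT hBT ?_).transpose
  ext l i
  have hconj : A * diagonal (A.col i) =
      diagonal (A.col i) * (B * diagonal (B.row i) * B⁻¹) := by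
    have hB' := (isUnit_iff_isUnit_det B).1 hB
    rw [← Matrix.mul_assoc, ← Matrix.mul_assoc, ← isTheta_iff_mul_diagonal_mul.1 h i,
      mul_nonsing_inv_cancel_right _ _ hB']
  have hdiag : A l i * (B * diagonal (B.row i) * B⁻¹) l l = A l i * A l l := by
    simpa only [mul_diagonal, diagonal_mul, col_apply, mul_comm (A l l)] using
      (congrFun₂ hconj l l).symm
  calc ((Bᵀ⁻¹ ⊙ Bᵀᵀ) * Bᵀ) l i = (B * diagonal (B.row i) * B⁻¹) l l := by
        simp only [← transpose_nonsing_inv, mul_apply (M := B⁻¹ᵀ ⊙ Bᵀᵀ), mul_apply (N := B⁻¹),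
          mul_diagonal, hadamard_apply, transpose_apply, row_apply]
        exact Finset.sum_congr rfl fun p _ => by ring
    _ = vecMulVec A.diag 1 l i := by
        rw [mul_left_cancel₀ (hA0 l i) hdiag, vecMulVec_apply, diag_apply, Pi.one_apply, mul_one]

theorem IsTheta.exists_mulVec_colProd_sinv_eq_smul (h : IsTheta A B A B) (hA : ∀ i j, A i j ≠ 0)
    (hB : IsTypeII B) (i j : ι) : ∃ c : ℂ, c ≠ 0 ∧
      B *ᵥ colProd Bᵀ (sinv Bᵀ) i j = c • colProd Aᵀ (sinv Aᵀ) j i :=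
  have : Nonempty ι := ⟨i⟩
  ⟨Fintype.card ι * A i j, mul_ne_zero (Nat.cast_ne_zero.2 Fintype.card_ne_zero) (hA i j),
    (isTheta_iff_mulVec_colProd_sinv hA hB).1 h i j⟩

theorem IsTheta.isTheta_hadamard_mul_iff (h : IsTheta A B A B) (hA : ∀ i j, A i j ≠ 0)
    (hB : IsTypeII B) :
    IsTheta A B (A ⊙ X) (B * N) ↔ IsTheta Bᵀ (sinv Bᵀ) N X := by
  rw [isTheta_iff_mulVec_colProd_sinv hA hB]
  refine forall₂_congr fun i j => ?_
  have hB_inj : Function.Injective B.mulVec := mulVec_injective_iff_isUnit.2 hB.isUnit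
  rw [hadamard_apply, ← mul_assoc, mul_comm, mul_smul,
    ← (isTheta_iff_mulVec_colProd_sinv hA hB).1 h, ← mulVec_mulVec, ← mulVec_smul, hB_inj.eq_iff]

theorem IsTheta.isTheta_sinv_iff_of_mul_eq (h : IsTheta A B A B) (hA : ∀ i j, A i j ≠ 0)
    (hB : IsTypeII B) (hLN : L * B = B * N) :
    IsTheta Aᵀ (sinv Aᵀ) L Xᵀ ↔ IsTheta Bᵀ (sinv Bᵀ) N X := by
  refine forall_comm.trans (forall₂_congr fun i j => ?_)
  change L *ᵥ _ = X i j • _ ↔ _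
  obtain ⟨c, hc, hBc⟩ := h.exists_mulVec_colProd_sinv_eq_smul hA hB i j
  have hB_inj : Function.Injective B.mulVec := mulVec_injective_iff_isUnit.2 hB.isUnit
  calc L *ᵥ colProd Aᵀ (sinv Aᵀ) j i = X i j • colProd Aᵀ (sinv Aᵀ) j i
      ↔ c • L *ᵥ colProd Aᵀ (sinv Aᵀ) j i = c • X i j • colProd Aᵀ (sinv Aᵀ) j i :=
        (smul_right_injective _ hc).eq_iff.symm
    _ ↔ B *ᵥ N *ᵥ colProd Bᵀ (sinv Bᵀ) i j = B *ᵥ X i j • colProd Bᵀ (sinv Bᵀ) i j := by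
        rw [mulVec_mulVec, ← hLN, ← mulVec_mulVec, mulVec_smul, hBc, mulVec_smul, smul_comm c]
    _ ↔ N *ᵥ colProd Bᵀ (sinv Bᵀ) i j = X i j • colProd Bᵀ (sinv Bᵀ) i j := hB_inj.eq_iff

theorem IsTheta.isTheta_sinv_transpose_conj (h : IsTheta A B A B) (hA : IsTypeII A)
    (hB : IsTypeII B) (hN : IsTheta Bᵀ (sinv Bᵀ) N X) :
    IsTheta B (sinv B) (B * N * B⁻¹)ᵀ (B⁻¹ * Xᵀ * B) := by
  have hB' := (isUnit_iff_isUnit_det B).1 hB.isUnit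
  have hL : IsTheta Aᵀ (sinv Aᵀ) (B * N * B⁻¹) Xᵀ :=
    (h.isTheta_sinv_iff_of_mul_eq hA.1 hB (nonsing_inv_mul_cancel_right _ _ hB')).2 hN
  have hX : IsTheta A (sinv A) Xᵀ ((Fintype.card ι : ℂ) • (B * N * B⁻¹)ᵀ) :=
    (isTheta_sinv_iff_transpose hA.transpose).1 hL
  have hXB : Xᵀ * B = B * (B⁻¹ * Xᵀ * B) := by
    rw [Matrix.mul_assoc B⁻¹, mul_nonsing_inv_cancel_left _ _ hB']
  rw [isTheta_sinv_iff_transpose hB, transpose_transpose]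
  refine (h.transpose_self.isTheta_sinv_iff_of_mul_eq hA.transpose.1 hB hXB).1 ?_
  rwa [transpose_transpose, transpose_smul]

theorem IsTheta.exists_theta_transpose (h : IsTheta A B A B) (h' : IsTheta A Bᵀ A Bᵀ)
    (hA : IsTypeII A) (hB : IsTypeII B) (hH : IsTheta A B H S) : ∃ M, IsTheta A Bᵀ M Sᵀ := by
  have hB' := (isUnit_iff_isUnit_det B).1 hB.isUnit
  obtain ⟨X, rfl⟩ : ∃ X, H = A ⊙ X :=
    ⟨sinv A ⊙ H, by ext i j; exact (mul_inv_cancel_left₀ (hA.1 i j) _).symm⟩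
  obtain ⟨N, rfl⟩ : ∃ N, S = B * N := ⟨B⁻¹ * S, (mul_nonsing_inv_cancel_left _ _ hB').symm⟩
  have hN : IsTheta Bᵀ (sinv Bᵀ) N X := (h.isTheta_hadamard_mul_iff hA.1 hB).1 hH
  have hS : (B * N)ᵀ = Bᵀ * (B * N * B⁻¹)ᵀ := by
    rw [← transpose_mul, nonsing_inv_mul_cancel_right _ _ hB']
  rw [hS]
  exact ⟨_, (h'.isTheta_hadamard_mul_iff hA.1 hB.transpose).2
    (h.isTheta_sinv_transpose_conj hA hB hN)⟩

end Jones

theorem exists_unique_paired_general {ι : Type*} [Fintype ι] [DecidableEq ι]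
    {A B H : Matrix ι ι ℂ} (h : IsInvertibleJonesPair A B) (hH : InNomura A B H) :
    ∃! K : Matrix ι ι ℂ, Paired A B H K := by
  obtain ⟨⟨hA, hB0, hrel, hrel'⟩, hA0, hB⟩ := h
  have hJ : IsTheta A B A B := isTheta_of_jones_relation hrel
  have hJ' : IsTheta A Bᵀ A Bᵀ := isTheta_of_jones_relation hrel'
  choose S hS using hH
  obtain ⟨M, hM⟩ := hJ.exists_theta_transpose hJ' (hJ.isTypeII_left hA hB hB0)
    (hJ.isTypeII_right hA0 hB) (S := of S) hS
  refine ⟨Mᵀ, ⟨of S, hS, hM⟩, ?_⟩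
  rintro K ⟨S', hS', hK⟩
  obtain rfl : S' = of S := hS'.theta_unique hA0 hB0 hS
  rw [← transpose_inj, transpose_transpose]
  exact hK.eq_of_theta_eq hA0 ((isUnit_transpose B).2 hB) hM

theorem exists_unique_paired {n : ℕ} (hn : 0 < n)
    (A B H : Matrix (Fin n) (Fin n) ℂ)
    (h : IsInvertibleJonesPair A B) (hAs : Aᵀ = A) (hH : InNomura A B H) :
    ∃! K : Matrix (Fin n) (Fin n) ℂ, Paired A B H K :=
  exists_unique_paired_general h hH
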